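/- Let A be a finite-dimensional real affine space over V and let g ≠ 0 be a symmetric bilinear form on V. Then there exists a unique symmetric bilinear form C on the dual space of W_g such that: (i) C(ev_P, ev_P) = 0 for every P ∈ A; and (ii) C(φ, ψ) = −g(x_φ, x_ψ) for all linear functionals φ, ψ on W_g that annihilate the constant function 1 (note that constant and, more generally, affine functions belong to W_g), where for such a functional φ, x_φ ∈ V denotes the unique vector satisfying φ(f) = (linear part of f)(x_φ) for every affine function f : A → ℝ. -/

import Mathlib

/-!
A quadratic function with zero Hessian is affine, so subtracting a multiple of
`q_O P = g (P - O) (P - O) / 2`, whose Hessian is `g`, shows that `W_g` is spanned by the affine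
functions and `q_O`. Hence `W_g` is finite-dimensional, and the evaluations `ev_P`, having no
common zero, span its dual.

*Uniqueness.* The functional `ev_P - ev_Q` annihilates `1` and is represented by `P - Q`. Expanding
`C (ev_P - ev_Q, ev_P - ev_Q) = -g (P - Q, P - Q)` and using that evaluations are isotropic gives
`C (ev_P, ev_Q) = g (P - Q, P - Q) / 2`, the entries of the Cayley–Menger matrix.

*Existence.* `C (φ, ψ) = φ 1 * ψ q_O + φ q_O * ψ 1 - g (x_φ, x_ψ)` works, where `x_φ` represents `φ`
on the affine functions vanishing at `O`.
-/

/-- A function `δ : A → ℝ` on a real affine space is *quadratic* if for all points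
`P, Q` and all `α, β ∈ ℝ` with `α + β = 1`,
`δ(α·P + β·Q) = α(α−β)·δ(P) + β(β−α)·δ(Q) + 4αβ·δ(midpoint(P,Q))`. -/
def IsQuadraticFn {V A : Type*} [AddCommGroup V] [Module ℝ V] [AddTorsor V A]
    (δ : A → ℝ) : Prop :=
  ∀ (P Q : A) (α β : ℝ), α + β = 1 →
    δ (AffineMap.lineMap P Q β) =
      α * (α - β) * δ P + β * (β - α) * δ Q + 4 * α * β * δ (midpoint ℝ P Q)

/-- `B` is the Hessian of `δ`. -/
def IsHessianOf {V A : Type*} [AddCommGroup V] [Module ℝ V] [AddTorsor V A]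
    (δ : A → ℝ) (B : LinearMap.BilinForm ℝ V) : Prop :=
  ∀ P Q : A, 2 * δ P + 2 * δ Q - 4 * δ (midpoint ℝ P Q) =
    (1/2 : ℝ) * B (Q -ᵥ P) (Q -ᵥ P)

/-- `W_g`: the space of quadratic functions `A → ℝ` whose Hessian is a scalar
multiple of `g`, as a submodule of `A → ℝ`. -/
def Wg {V : Type*} [AddCommGroup V] [Module ℝ V]
    (g : LinearMap.BilinForm ℝ V) (A : Type*) [AddTorsor V A] :
    Submodule ℝ (A → ℝ) where
  carrier := {δ : A → ℝ | IsQuadraticFn δ ∧ ∃ c : ℝ, IsHessianOf δ (c • g)}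
  add_mem' := by
    rintro a b ⟨ha1, ca, ha2⟩ ⟨hb1, cb, hb2⟩
    refine ⟨fun P Q α β h => ?_, ca + cb, fun P Q => ?_⟩
    · have h1 := ha1 P Q α β h
      have h2 := hb1 P Q α β h
      simp only [Pi.add_apply]
      linear_combination h1 + h2
    · have h1 := ha2 P Q
      have h2 := hb2 P Q
      simp only [Pi.add_apply, LinearMap.add_apply, LinearMap.smul_apply,
        smul_eq_mul] at h1 h2 ⊢
      linear_combination h1 + h2
  zero_mem' := by
    refine ⟨fun P Q α β h => ?_, 0, fun P Q => ?_⟩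
    · simp only [Pi.zero_apply]; ring
    · simp only [Pi.zero_apply, zero_smul, LinearMap.zero_apply]; ring
  smul_mem' := by
    rintro c a ⟨ha1, ca, ha2⟩
    refine ⟨fun P Q α β h => ?_, c * ca, fun P Q => ?_⟩
    · have h1 := ha1 P Q α β h
      simp only [Pi.smul_apply, smul_eq_mul]
      linear_combination c * h1
    · have h1 := ha2 P Q
      simp only [Pi.smul_apply, smul_eq_mul, LinearMap.smul_apply] at h1 ⊢
      linear_combination c * h1

/-- The evaluation functional `ev_P : W_g → ℝ` at a point `P`. -/
def evW {V : Type*} [AddCommGroup V] [Module ℝ V]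
    (g : LinearMap.BilinForm ℝ V) {A : Type*} [AddTorsor V A] (P : A) :
    Module.Dual ℝ (Wg g A) where
  toFun δ := (δ : A → ℝ) P
  map_add' x y := rfl
  map_smul' c x := rfl

/-- `φ` annihilates the constant function `1 ∈ W_g`. -/
def AnnihilatesOne {V : Type*} [AddCommGroup V] [Module ℝ V]
    (g : LinearMap.BilinForm ℝ V) {A : Type*} [AddTorsor V A]
    (φ : Module.Dual ℝ (Wg g A)) : Prop :=
  ∀ h1 : (fun _ : A => (1 : ℝ)) ∈ Wg g A, φ ⟨fun _ => (1 : ℝ), h1⟩ = 0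

/-- `x ∈ V` represents the functional `φ` on `W_g`: for every affine function
`f : A → ℝ` (an element of `W_g`), `φ(f) = (linear part of f)(x)`. -/
def Represents {V : Type*} [AddCommGroup V] [Module ℝ V]
    (g : LinearMap.BilinForm ℝ V) {A : Type*} [AddTorsor V A]
    (φ : Module.Dual ℝ (Wg g A)) (x : V) : Prop :=
  ∀ (f : A →ᵃ[ℝ] ℝ) (hf : ⇑f ∈ Wg g A), φ ⟨⇑f, hf⟩ = f.linear x

/-- `C` is a Cayley–Menger form for `g`: a symmetric bilinear form on the dual of
`W_g` such that (i) every evaluation functional `ev_P` is isotropic, and (ii) on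
functionals annihilating the constant `1`, `C(φ, ψ) = −g(x_φ, x_ψ)`. -/
def IsCayleyMenger {V : Type*} [AddCommGroup V] [Module ℝ V]
    (g : LinearMap.BilinForm ℝ V) (A : Type*) [AddTorsor V A]
    (C : LinearMap.BilinForm ℝ (Module.Dual ℝ (Wg g A))) : Prop :=
  (∀ φ ψ, C φ ψ = C ψ φ) ∧
  (∀ P : A, C (evW g P) (evW g P) = 0) ∧
  (∀ (φ ψ : Module.Dual ℝ (Wg g A)) (x y : V),
    AnnihilatesOne g φ → AnnihilatesOne g ψ →
    Represents g φ x → Represents g ψ y → C φ ψ = - g x y)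

section AffineMap

variable {k V₁ P₁ V₂ P₂ : Type*} [Ring k] [Invertible (2 : k)] [AddCommGroup V₁] [Module k V₁]
  [AddTorsor V₁ P₁] [AddCommGroup V₂] [Module k V₂] [AddTorsor V₂ P₂]

lemma exists_affineMap_coe_eq_of_apply_lineMap {f : P₁ → P₂}
    (hf : ∀ (p q : P₁) (t : k), f (AffineMap.lineMap p q t) = AffineMap.lineMap (f p) (f q) t) :
    ∃ F : P₁ →ᵃ[k] P₂, ⇑F = f := by
  obtain ⟨o⟩ : Nonempty P₁ := inferInstance
  let L : V₁ → V₂ := fun v => f (v +ᵥ o) -ᵥ f o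
  have map_smul (t : k) (v : V₁) : L (t • v) = t • L v := by
    rw [← AffineMap.lineMap_vsub_left, ← hf, AffineMap.lineMap_vadd_apply]
  have map_midpoint (v w : V₁) : L (midpoint k v w) = midpoint k (L v) (L w) :=
    calc L (midpoint k v w)
        = f (midpoint k (v +ᵥ o) (w +ᵥ o)) -ᵥ f o := by
          rw [← midpoint_vadd_midpoint, midpoint_self]
      _ = midpoint k (f (v +ᵥ o)) (f (w +ᵥ o)) -ᵥ midpoint k (f o) (f o) := by
          rw [midpoint_self]
          exact congrArg (· -ᵥ f o) (hf _ _ _)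
      _ = midpoint k (L v) (L w) := midpoint_vsub_midpoint _ _ _ _
  let L' : V₁ →+ V₂ := .ofMapMidpoint k k L (by simp [L]) map_midpoint
  exact ⟨.mk' f { L' with map_smul' := map_smul } o fun p => by simp [L', L], rfl⟩

end AffineMap

section CayleyMenger

variable {V A : Type*} [AddCommGroup V] [Module ℝ V] [AddTorsor V A]

lemma isQuadraticFn_affineMap (f : A →ᵃ[ℝ] ℝ) : IsQuadraticFn f := by
  intro P Q α β hαβ
  obtain rfl : α = 1 - β := eq_sub_of_add_eq hαβ
  rw [f.apply_lineMap, f.map_midpoint, AffineMap.lineMap_apply_ring, midpoint_eq_smul_add,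
    invOf_eq_inv, smul_eq_mul]
  ring

lemma isHessianOf_zero_affineMap (f : A →ᵃ[ℝ] ℝ) : IsHessianOf f 0 := by
  intro P Q
  rw [f.map_midpoint, midpoint_eq_smul_add, invOf_eq_inv, smul_eq_mul, LinearMap.zero_apply,
    LinearMap.zero_apply]
  ring

lemma IsHessianOf.sub {δ₁ δ₂ : A → ℝ} {B₁ B₂ : LinearMap.BilinForm ℝ V}
    (h₁ : IsHessianOf δ₁ B₁) (h₂ : IsHessianOf δ₂ B₂) : IsHessianOf (δ₁ - δ₂) (B₁ - B₂) := by
  intro P Q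
  simp only [Pi.sub_apply, LinearMap.sub_apply]
  linear_combination h₁ P Q - h₂ P Q

lemma IsHessianOf.smul {δ : A → ℝ} {B : LinearMap.BilinForm ℝ V} (h : IsHessianOf δ B) (c : ℝ) :
    IsHessianOf (c • δ) (c • B) := by
  intro P Q
  simp only [Pi.smul_apply, LinearMap.smul_apply, smul_eq_mul]
  linear_combination c * h P Q

lemma IsQuadraticFn.exists_affineMap_of_isHessianOf_zero {δ : A → ℝ} (hδ : IsQuadraticFn δ)
    (hδ₀ : IsHessianOf δ 0) : ∃ f : A →ᵃ[ℝ] ℝ, ⇑f = δ := by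
  have apply_midpoint (P Q : A) : δ (midpoint ℝ P Q) = (δ P + δ Q) / 2 := by
    have := hδ₀ P Q
    simp only [LinearMap.zero_apply, mul_zero] at this
    linarith
  refine exists_affineMap_coe_eq_of_apply_lineMap fun P Q t => ?_
  rw [hδ P Q (1 - t) t (sub_add_cancel 1 t), apply_midpoint, AffineMap.lineMap_apply_ring]
  ring

/-- The function `q_O`, half the squared `g`-distance to the point `O`. The factor `1 / 2` makes its
Hessian equal to `g`. -/
noncomputable def halfSqDist (g : LinearMap.BilinForm ℝ V) (O P : A) : ℝ :=
  g (P -ᵥ O) (P -ᵥ O) / 2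

variable (g : LinearMap.BilinForm ℝ V)

lemma halfSqDist_lineMap (O P Q : A) (t : ℝ) :
    halfSqDist g O (AffineMap.lineMap P Q t) =
      (1 - t) * halfSqDist g O P + t * halfSqDist g O Q - t * (1 - t) * halfSqDist g P Q := by
  have hPQ : Q -ᵥ P = (Q -ᵥ O) - (P -ᵥ O) := (vsub_sub_vsub_cancel_right Q P O).symm
  have hline : AffineMap.lineMap P Q t -ᵥ O = (1 - t) • (P -ᵥ O) + t • (Q -ᵥ O) := by
    rw [AffineMap.lineMap_apply, vadd_vsub_assoc, hPQ]
    module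
  simp only [halfSqDist, hline, hPQ, map_add, map_sub, map_smul, LinearMap.add_apply,
    LinearMap.sub_apply, LinearMap.smul_apply, smul_eq_mul]
  ring

lemma halfSqDist_midpoint (O P Q : A) :
    halfSqDist g O (midpoint ℝ P Q) =
      (halfSqDist g O P + halfSqDist g O Q) / 2 - halfSqDist g P Q / 4 := by
  rw [midpoint, halfSqDist_lineMap, invOf_eq_inv]
  ring

lemma isQuadraticFn_halfSqDist (O : A) : IsQuadraticFn (halfSqDist g O) := by
  intro P Q α β hαβ
  obtain rfl : α = 1 - β := eq_sub_of_add_eq hαβ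
  rw [halfSqDist_lineMap, halfSqDist_midpoint]
  ring

lemma isHessianOf_halfSqDist (O : A) : IsHessianOf (halfSqDist g O) g := by
  intro P Q
  rw [halfSqDist_midpoint, halfSqDist.eq_def g P Q]
  ring

namespace Wg

/-- The inclusion of the affine functions into `W_g`. -/
def ofAffineMap : (A →ᵃ[ℝ] ℝ) →ₗ[ℝ] Wg g A where
  toFun f := ⟨f, isQuadraticFn_affineMap f, 0, by
    simpa only [zero_smul] using isHessianOf_zero_affineMap f⟩
  map_add' _ _ := rfl
  map_smul' _ _ := rfl

/-- The function `halfSqDist g O` as an element of `W_g`. -/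
noncomputable def ofHalfSqDist (O : A) : Wg g A :=
  ⟨halfSqDist g O, isQuadraticFn_halfSqDist g O, 1, by
    simpa only [one_smul] using isHessianOf_halfSqDist g O⟩

variable {g} in
lemma exists_eq_ofAffineMap_add_smul_ofHalfSqDist (δ : Wg g A) (O : A) :
    ∃ (f : A →ᵃ[ℝ] ℝ) (c : ℝ), δ = ofAffineMap g f + c • ofHalfSqDist g O := by
  obtain ⟨c, hc⟩ := δ.2.2
  have hessian_zero : IsHessianOf ((δ - c • ofHalfSqDist g O : Wg g A) : A → ℝ) 0 :=
    sub_self (c • g) ▸ hc.sub ((isHessianOf_halfSqDist g O).smul c)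
  obtain ⟨f, hf⟩ := (δ - c • ofHalfSqDist g O).2.1.exists_affineMap_of_isHessianOf_zero hessian_zero
  exact ⟨f, c, eq_add_of_sub_eq (Subtype.ext hf.symm)⟩

instance finiteDimensional [FiniteDimensional ℝ V] : FiniteDimensional ℝ (Wg g A) := by
  obtain ⟨O⟩ : Nonempty A := inferInstance
  refine Module.Finite.of_surjective
    ((ofAffineMap g).coprod (LinearMap.toSpanSingleton ℝ (Wg g A) (ofHalfSqDist g O))) fun δ => ?_
  obtain ⟨f, c, rfl⟩ := exists_eq_ofAffineMap_add_smul_ofHalfSqDist δ O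
  exact ⟨(f, c), rfl⟩

end Wg

lemma span_range_evW [FiniteDimensional ℝ V] :
    Submodule.span ℝ (Set.range (evW g : A → Module.Dual ℝ (Wg g A))) = ⊤ := by
  refine Submodule.span_eq_top_of_ne_zero fun δ hδ => ?_
  contrapose! hδ
  exact Subtype.ext (funext fun P => hδ _ ⟨P, rfl⟩)

lemma annihilatesOne_evW_sub_evW (P Q : A) : AnnihilatesOne g (evW g P - evW g Q) :=
  fun _ => sub_self (1 : ℝ)

lemma represents_evW_sub_evW (P Q : A) : Represents g (evW g P - evW g Q) (P -ᵥ Q) :=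
  fun f _ => (f.linearMap_vsub P Q).symm

section Uniqueness

variable {g} {C C' : LinearMap.BilinForm ℝ (Module.Dual ℝ (Wg g A))}

lemma IsCayleyMenger.apply_evW_evW (hC : IsCayleyMenger g A C) (P Q : A) :
    C (evW g P) (evW g Q) = halfSqDist g Q P := by
  obtain ⟨symm, isotropic, apply_eq⟩ := hC
  have h := apply_eq _ _ _ _ (annihilatesOne_evW_sub_evW g P Q) (annihilatesOne_evW_sub_evW g P Q)
    (represents_evW_sub_evW g P Q) (represents_evW_sub_evW g P Q)
  simp only [map_sub, LinearMap.sub_apply, isotropic, symm (evW g Q) (evW g P)] at h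
  rw [halfSqDist]
  linarith

lemma IsCayleyMenger.unique [FiniteDimensional ℝ V] (hC : IsCayleyMenger g A C)
    (hC' : IsCayleyMenger g A C') : C = C' :=
  LinearMap.ext_on_range (span_range_evW g) fun P =>
    LinearMap.ext_on_range (span_range_evW g) fun Q => by
      rw [hC.apply_evW_evW, hC'.apply_evW_evW]

end Uniqueness

section Existence

/-- The affine function `ℓ (· - O)` vanishing at `O`, depending linearly on the linear form `ℓ`. -/
def linearFormAt (O : A) : Module.Dual ℝ V →ₗ[ℝ] A →ᵃ[ℝ] ℝ where
  toFun ℓ := ℓ.toAffineMap.comp (AffineEquiv.vaddConst ℝ O).symm.toAffineMap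
  map_add' _ _ := rfl
  map_smul' _ _ := rfl

variable [FiniteDimensional ℝ V]

/-- The vector representing a functional `φ` on the affine functions vanishing at `O`. It is the
vector `x_φ`, independent of `O`, when `φ` annihilates `1`. -/
noncomputable def reprVector (O : A) : Module.Dual ℝ (Wg g A) →ₗ[ℝ] V :=
  (Module.evalEquiv ℝ V).symm.toLinearMap ∘ₗ (Wg.ofAffineMap g ∘ₗ linearFormAt O).dualMap

lemma reprVector_eq_iff {O : A} {φ : Module.Dual ℝ (Wg g A)} {x : V} :
    reprVector g O φ = x ↔
      ∀ ℓ : Module.Dual ℝ V, φ (Wg.ofAffineMap g (linearFormAt O ℓ)) = ℓ x :=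
  (Module.evalEquiv ℝ V).symm_apply_eq.trans LinearMap.ext_iff

lemma reprVector_evW (O P : A) : reprVector g O (evW g P) = P -ᵥ O :=
  (reprVector_eq_iff g).2 fun _ => rfl

variable {g} in
lemma Represents.reprVector_eq {φ : Module.Dual ℝ (Wg g A)} {x : V} (h : Represents g φ x) (O : A) :
    reprVector g O φ = x :=
  (reprVector_eq_iff g).2 fun ℓ => h (linearFormAt O ℓ) (Wg.ofAffineMap g (linearFormAt O ℓ)).2

/-- The Cayley–Menger form on the dual of `W_g`, written out with an auxiliary origin `O`, on which
it does not depend when `g` is symmetric. -/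
noncomputable def cayleyMengerForm (O : A) : LinearMap.BilinForm ℝ (Module.Dual ℝ (Wg g A)) :=
  let evalOne := Module.Dual.eval ℝ (Wg g A) (Wg.ofAffineMap g (AffineMap.const ℝ A 1))
  let evalHalfSqDist := Module.Dual.eval ℝ (Wg g A) (Wg.ofHalfSqDist g O)
  .linMulLin evalOne evalHalfSqDist + .linMulLin evalHalfSqDist evalOne -
    g.comp (reprVector g O) (reprVector g O)

lemma cayleyMengerForm_apply (O : A) (φ ψ : Module.Dual ℝ (Wg g A)) :
    cayleyMengerForm g O φ ψ =
      φ (Wg.ofAffineMap g (AffineMap.const ℝ A 1)) * ψ (Wg.ofHalfSqDist g O) +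
      φ (Wg.ofHalfSqDist g O) * ψ (Wg.ofAffineMap g (AffineMap.const ℝ A 1)) -
      g (reprVector g O φ) (reprVector g O ψ) :=
  rfl

lemma cayleyMengerForm_evW_self (O P : A) : cayleyMengerForm g O (evW g P) (evW g P) = 0 := by
  have apply_one : evW g P (Wg.ofAffineMap g (AffineMap.const ℝ A 1)) = 1 := rfl
  have apply_halfSqDist : evW g P (Wg.ofHalfSqDist g O) = g (P -ᵥ O) (P -ᵥ O) / 2 := rfl
  rw [cayleyMengerForm_apply, apply_one, apply_halfSqDist, reprVector_evW]
  ring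

variable {g}

lemma cayleyMengerForm_apply_of_represents (O : A) {φ ψ : Module.Dual ℝ (Wg g A)} {x y : V}
    (hφ : AnnihilatesOne g φ) (hψ : AnnihilatesOne g ψ) (hx : Represents g φ x)
    (hy : Represents g ψ y) : cayleyMengerForm g O φ ψ = -g x y := by
  have hφ₁ : φ (Wg.ofAffineMap g (AffineMap.const ℝ A 1)) = 0 := hφ _
  have hψ₁ : ψ (Wg.ofAffineMap g (AffineMap.const ℝ A 1)) = 0 := hψ _
  rw [cayleyMengerForm_apply, hφ₁, hψ₁, hx.reprVector_eq, hy.reprVector_eq]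
  ring

lemma isCayleyMenger_cayleyMengerForm (hg : g.IsSymm) (O : A) :
    IsCayleyMenger g A (cayleyMengerForm g O) := by
  refine ⟨fun φ ψ => ?_, cayleyMengerForm_evW_self g O,
    fun _ _ _ _ => cayleyMengerForm_apply_of_represents O⟩
  rw [cayleyMengerForm_apply, cayleyMengerForm_apply, hg.eq]
  ring

end Existence

end CayleyMenger

/-- For every nonzero symmetric bilinear form `g` on `V` there is a
unique symmetric bilinear form `C` (the Cayley–Menger form) on the dual of `W_g`
satisfying: (i) `C(ev_P, ev_P) = 0` for every point `P ∈ A`; and (ii)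
`C(φ, ψ) = −g(x_φ, x_ψ)` for all functionals `φ, ψ` annihilating the constant
function `1`, where `x_φ` is the vector representing `φ` on affine functions. -/
theorem stmt15 {V A : Type*} [AddCommGroup V] [Module ℝ V] [AddTorsor V A]
    [FiniteDimensional ℝ V]
    (g : LinearMap.BilinForm ℝ V) (hgs : ∀ x y, g x y = g y x) (hg0 : g ≠ 0) :
    ∃! C : LinearMap.BilinForm ℝ (Module.Dual ℝ (Wg g A)),
      IsCayleyMenger g A C := by
  obtain ⟨O⟩ : Nonempty A := inferInstance
  have hC : IsCayleyMenger g A (cayleyMengerForm g O) := isCayleyMenger_cayleyMengerForm ⟨hgs⟩ O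
  exact ⟨cayleyMengerForm g O, hC, fun _ hC' => hC'.unique hC⟩
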